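/- arXiv:1502.05030 — 3 statements merged into one kernel-verified Lean document; each statement's English description precedes it below -/
import Mathlib

section
/- Let x ∈ [-1,1], X = {x}, and suppose t = arccos(x)/(2π) is rational, say t = p/q with p, q coprime nonnegative integers and q odd. Then the supremum of λ(I) over all Lebesgue measurable X-avoiding subsets I of the unit circle S^1 equals (q-1)/(2q), and this supremum is attained: there exists a measurable X-avoiding set I ⊆ S^1 with λ(I) = (q-1)/(2q). -/
open MeasureTheory Metric Matrix Filter
open scoped RealInnerProductSpace ENNReal

noncomputable section

/-- `ℝ^n` as a Euclidean space. -/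
abbrev Eucl (n : ℕ) : Type := EuclideanSpace ℝ (Fin n)

/-- The unit sphere `S^{n-1}` in `ℝ^n`. -/
abbrev Sph (n : ℕ) := Metric.sphere (0 : Eucl n) 1

/-- The Lebesgue surface measure on the unit sphere `S^{n-1}`, normalised so that the
total measure of the sphere is `1`. -/
def sphMeasure (n : ℕ) : Measure (Sph n) :=
  (((volume : Measure (Eucl n)).toSphere) Set.univ)⁻¹ • (volume : Measure (Eucl n)).toSphere

/-- A subset `I` of the sphere is `X`-avoiding if `⟪ξ, η⟫ ∉ X` for all `ξ, η ∈ I`. -/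
def Avoids {n : ℕ} (X : Set ℝ) (I : Set (Sph n)) : Prop :=
  ∀ ξ ∈ I, ∀ η ∈ I, ⟪(ξ : Eucl n), (η : Eucl n)⟫ ∉ X

/-! Write `x = cos (2πp/q)` and let `R` be the rotation of the circle by `2πp/q`. Two points of the
circle have inner product `x` iff one of them is the image of the other under `R`, so a set `I` is
`{x}`-avoiding iff `I` and `R⁻¹ I` are disjoint. Every orbit of `R` is a cycle of length `q`, on
which `I` has no two consecutive points, hence at most `⌊q/2⌋` points; integrating this count gives
`q λ(I) ≤ ⌊q/2⌋`. For equality, cut the circle into `q` equal arcs: `R` moves each arc `p` steps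
forward, and since `p` is invertible modulo `q` the arcs can be relabelled by `ℤ/q` so that `R`
raises the label by one. The union of the arcs labelled `0, 2, 4, …, 2⌊q/2⌋ - 2` is then optimal. -/

section Dynamics

variable {α : Type*} {f : α → α} {I : Set α} {q : ℕ}

lemma indicator_one_add_apply_le_one (hI : Disjoint I (f ⁻¹' I)) (x : α) :
    I.indicator (1 : α → ℕ) x + I.indicator 1 (f x) ≤ 1 := by
  by_cases hx : x ∈ I
  · have hfx : f x ∉ I := Set.disjoint_left.mp hI hx
    simp [hx, hfx]
  · rw [Set.indicator_of_notMem hx, zero_add]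
    exact Set.indicator_apply_le' (fun _ => le_rfl) fun _ => zero_le_one

lemma birkhoffSum_apply_of_isPeriodicPt {M : Type*} [AddCommMonoid M] [IsRightCancelAdd M]
    {x : α} (hx : Function.IsPeriodicPt f q x) (g : α → M) :
    birkhoffSum f g q (f x) = birkhoffSum f g q x := by
  have h : birkhoffSum f g q (f x) + g x = birkhoffSum f g q x + g x := by
    rw [add_comm, ← birkhoffSum_succ', birkhoffSum_succ, hx.eq]
  exact add_right_cancel h

lemma birkhoffSum_indicator_one_le_half {x : α} (hx : Function.IsPeriodicPt f q x)
    (hI : Disjoint I (f ⁻¹' I)) : birkhoffSum f (I.indicator (1 : α → ℕ)) q x ≤ q / 2 := by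
  have two_mul_le : birkhoffSum f (I.indicator (1 : α → ℕ)) q x +
      birkhoffSum f (I.indicator 1) q (f x) ≤ q := by
    simp only [birkhoffSum, ← Finset.sum_add_distrib, ← Function.iterate_succ_apply,
      Function.iterate_succ_apply']
    calc _ ≤ ∑ _k ∈ Finset.range q, 1 :=
          Finset.sum_le_sum fun k _ => indicator_one_add_apply_le_one hI (f^[k] x)
      _ = q := by simp
  rw [birkhoffSum_apply_of_isPeriodicPt hx] at two_mul_le
  omega

variable [MeasurableSpace α] {μ : Measure α}

lemma lintegral_birkhoffSum (hf : MeasurePreserving f μ μ) {g : α → ℝ≥0∞} (hg : Measurable g)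
    (n : ℕ) : ∫⁻ x, birkhoffSum f g n x ∂μ = n * ∫⁻ x, g x ∂μ := by
  simp only [birkhoffSum]
  rw [lintegral_finsetSum (f := fun k x => g (f^[k] x)) _
    fun k _ => hg.comp (hf.iterate k).measurable]
  simp [(hf.iterate _).lintegral_comp hg]

theorem natCast_mul_measure_le_of_disjoint_preimage (hf : MeasurePreserving f μ μ)
    (hper : ∀ x, Function.IsPeriodicPt f q x) (hIm : MeasurableSet I)
    (hI : Disjoint I (f ⁻¹' I)) : q * μ I ≤ (q / 2 : ℕ) * μ Set.univ := by
  have visits_le (x : α) : birkhoffSum f (I.indicator (1 : α → ℝ≥0∞)) q x ≤ (q / 2 : ℕ) := by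
    have hcast : I.indicator (1 : α → ℝ≥0∞) =
        Nat.castAddMonoidHom ℝ≥0∞ ∘ I.indicator (1 : α → ℕ) := by
      ext y; by_cases hy : y ∈ I <;> simp [hy]
    rw [hcast, ← map_birkhoffSum]
    exact Nat.cast_le.mpr (birkhoffSum_indicator_one_le_half (hper x) hI)
  calc q * μ I = ∫⁻ x, birkhoffSum f (I.indicator 1) q x ∂μ := by
        rw [lintegral_birkhoffSum hf (measurable_one.indicator hIm), lintegral_indicator_one hIm]
    _ ≤ ∫⁻ _, (q / 2 : ℕ) ∂μ := lintegral_mono visits_le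
    _ = (q / 2 : ℕ) * μ Set.univ := lintegral_const _

lemma natCast_mul_measure_preimage_of_semiconj [NeZero q] (hf : MeasurePreserving f μ μ)
    {J : α → ZMod q} (hJm : Measurable J) (hJ : Function.Semiconj J f (· + 1))
    (S : Finset (ZMod q)) : q * μ (J ⁻¹' S) = S.card * μ Set.univ := by
  have fiber_periodic : Function.Periodic (fun a => μ (J ⁻¹' {a})) 1 := fun a => by
    dsimp only
    rw [← hf.measure_preimage (hJm (measurableSet_singleton _)).nullMeasurableSet,
      ← Set.preimage_comp, hJ.comp_eq, Set.preimage_comp]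
    simp
  have fiber_eq (a : ZMod q) : μ (J ⁻¹' {a}) = μ (J ⁻¹' {0}) := by
    simpa using fiber_periodic.nat_mul_eq a.val
  have measure_eq (T : Finset (ZMod q)) : μ (J ⁻¹' T) = T.card * μ (J ⁻¹' {0}) := by
    rw [← sum_measure_preimage_singleton T fun a _ => hJm (measurableSet_singleton a)]
    simp [fiber_eq]
  have measure_univ_eq : μ Set.univ = q * μ (J ⁻¹' {0}) := by
    simpa using measure_eq Finset.univ
  rw [measure_eq, measure_univ_eq, mul_left_comm]

lemma exists_finset_zmod_card_eq_half (q : ℕ) :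
    ∃ S : Finset (ZMod q), S.card = q / 2 ∧ ∀ a ∈ S, a + 1 ∉ S := by
  classical
  have cast_inj {m n : ℕ} (hm : m < q) (hn : n < q) (h : (m : ZMod q) = n) : m = n :=
    ((ZMod.natCast_eq_natCast_iff _ _ _).mp h).eq_of_lt_of_lt hm hn
  refine ⟨(Finset.range (q / 2)).image fun i => ((2 * i : ℕ) : ZMod q), ?_, ?_⟩
  · rw [Finset.card_image_of_injOn, Finset.card_range]
    intro i hi j hj h
    rw [Finset.coe_range, Set.mem_Iio] at hi hj
    have := cast_inj (by omega) (by omega) h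
    omega
  · simp only [Finset.mem_image, Finset.mem_range]
    rintro _ ⟨i, hi, rfl⟩ ⟨j, hj, h⟩
    rw [← Nat.cast_succ] at h
    have := cast_inj (by omega) (by omega) h
    omega

theorem isGreatest_measure_disjoint_preimage [NeZero q] [IsProbabilityMeasure μ]
    (hf : MeasurePreserving f μ μ) (hper : ∀ x, Function.IsPeriodicPt f q x) {J : α → ZMod q}
    (hJm : Measurable J) (hJ : Function.Semiconj J f (· + 1)) :
    IsGreatest {m : ℝ≥0∞ | ∃ I, MeasurableSet I ∧ Disjoint I (f ⁻¹' I) ∧ μ I = m}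
      ((q / 2 : ℕ) / q) := by
  have hq : (q : ℝ≥0∞) ≠ 0 := NeZero.ne _
  constructor
  · obtain ⟨S, hcard, hS⟩ := exists_finset_zmod_card_eq_half q
    refine ⟨J ⁻¹' S, hJm S.measurableSet, Set.disjoint_left.mpr fun x hx hfx => ?_, ?_⟩
    · rw [Set.mem_preimage, Set.mem_preimage, hJ] at hfx
      exact hS _ hx hfx
    · rw [ENNReal.eq_div_iff hq (ENNReal.natCast_ne_top q),
        natCast_mul_measure_preimage_of_semiconj hf hJm hJ, hcard, measure_univ, mul_one]
  · rintro _ ⟨I, hIm, hI, rfl⟩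
    rw [ENNReal.le_div_iff_mul_le (.inl hq) (.inl (ENNReal.natCast_ne_top q)), mul_comm]
    simpa using natCast_mul_measure_le_of_disjoint_preimage hf hper hIm hI

end Dynamics

section Sphere

variable {E F : Type*} [NormedAddCommGroup E] [NormedSpace ℝ E]
  [NormedAddCommGroup F] [NormedSpace ℝ F]

/-- The map between unit spheres induced by a linear isometry equivalence. -/
def sphereMap (L : E ≃ₗᵢ[ℝ] F) (ξ : sphere (0 : E) 1) : sphere (0 : F) 1 :=
  ⟨L ξ, by simp⟩

lemma continuous_sphereMap (L : E ≃ₗᵢ[ℝ] F) : Continuous (sphereMap L) :=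
  (L.continuous.comp continuous_subtype_val).subtype_mk _

open scoped Pointwise in
lemma smul_image_preimage_sphereMap (L : E ≃ₗᵢ[ℝ] F) (A : Set ℝ) (s : Set (sphere (0 : F) 1)) :
    A • (Subtype.val '' (sphereMap L ⁻¹' s)) = L ⁻¹' (A • (Subtype.val '' s)) := by
  ext v
  constructor
  · rintro ⟨r, hr, _, ⟨ξ, hξ, rfl⟩, rfl⟩
    exact ⟨r, hr, L ξ, ⟨sphereMap L ξ, hξ, rfl⟩, (map_smul L r _).symm⟩
  · rintro ⟨r, hr, _, ⟨η, hη, rfl⟩, hv⟩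
    refine ⟨r, hr, L.symm η, ⟨sphereMap L.symm η, ?_, rfl⟩, ?_⟩
    · simpa [sphereMap] using hη
    · rw [← L.symm_apply_apply v, ← hv]
      exact (map_smul L.symm r _).symm

lemma measurePreserving_sphereMap [MeasurableSpace E] [BorelSpace E] [MeasurableSpace F]
    [BorelSpace F] {μ : Measure E} {ν : Measure F} (L : E ≃ₗᵢ[ℝ] F)
    (hL : MeasurePreserving L μ ν) :
    MeasurePreserving (sphereMap L) μ.toSphere ν.toSphere := by
  have hm : Measurable (sphereMap L) := (continuous_sphereMap L).measurable
  refine ⟨hm, Measure.ext fun s hs => ?_⟩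
  rw [Measure.map_apply hm hs, Measure.toSphere_apply' _ hs, Measure.toSphere_apply' _ (hm hs),
    smul_image_preimage_sphereMap, hL.measure_preimage_emb L.toHomeomorph.measurableEmbedding,
    L.toLinearEquiv.finrank_eq]

lemma measurePreserving_sphereMap_sphMeasure {n : ℕ} (L : Eucl n ≃ₗᵢ[ℝ] Eucl n) :
    MeasurePreserving (sphereMap L) (sphMeasure n) (sphMeasure n) :=
  (measurePreserving_sphereMap L L.measurePreserving).smul_measure _

instance isProbabilityMeasure_sphMeasure (n : ℕ) [NeZero n] :
    IsProbabilityMeasure (sphMeasure n) where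
  measure_univ := by
    rw [sphMeasure, Measure.smul_apply, smul_eq_mul]
    refine ENNReal.inv_mul_cancel ?_ (measure_ne_top _ _)
    exact Measure.measure_univ_ne_zero.mpr (Measure.toSphere_ne_zero _)

end Sphere

section Rotation

/-- The Euclidean plane identified with `ℂ` by `(x, y) ↦ x + iy`. -/
def planeToComplex : Eucl 2 ≃ₗᵢ[ℝ] ℂ := Complex.orthonormalBasisOneI.repr.symm

/-- The point of Mathlib's unit circle in `ℂ` that corresponds to a point of `S^1 ⊆ ℝ^2`. -/
def circleCoord (ξ : Sph 2) : Circle := ⟨planeToComplex ξ, by simp [Submonoid.unitSphere]⟩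

/-- The rotation of `S^1` which is multiplication by `a` in complex coordinates. -/
def rotate (a : Circle) : Sph 2 → Sph 2 :=
  sphereMap ((planeToComplex.trans (rotation a)).trans planeToComplex.symm)

lemma circleCoord_injective : Function.Injective circleCoord := fun _ _ h =>
  Subtype.ext (planeToComplex.injective (congrArg ((↑) : Circle → ℂ) h))

lemma circleCoord_rotate (a : Circle) (ξ : Sph 2) :
    circleCoord (rotate a ξ) = a * circleCoord ξ := by
  apply Circle.ext
  rw [Circle.coe_mul]
  simp [circleCoord, rotate, sphereMap]

lemma isPeriodicPt_rotate {a : Circle} {q : ℕ} (ha : a ^ q = 1) (ξ : Sph 2) :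
    Function.IsPeriodicPt (rotate a) q ξ := by
  have hsemi : Function.Semiconj circleCoord (rotate a) (a * ·) := circleCoord_rotate a
  apply circleCoord_injective
  rw [hsemi.iterate_right q, mul_left_iterate]
  simp only [ha, one_mul]

lemma inner_eq_re_circleCoord_div (ξ η : Sph 2) :
    ⟪(ξ : Eucl 2), (η : Eucl 2)⟫ = ((circleCoord η / circleCoord ξ : Circle) : ℂ).re := by
  rw [inner_map_complex planeToComplex, div_eq_mul_inv, Circle.coe_mul, Circle.coe_inv_eq_conj]
  rfl

lemma circle_re_eq_re_iff {z w : Circle} : (z : ℂ).re = (w : ℂ).re ↔ z = w ∨ z = w⁻¹ := by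
  constructor
  · intro h
    have add_inv_eq : (z : ℂ) + (z : ℂ)⁻¹ = w + (w : ℂ)⁻¹ := by
      simp only [← Circle.coe_inv, Circle.coe_inv_eq_conj, Complex.add_conj, h]
    have : ((z : ℂ) - w) * (z - (w : ℂ)⁻¹) = 0 := by
      linear_combination (z : ℂ) * add_inv_eq - mul_inv_cancel₀ z.coe_ne_zero +
        mul_inv_cancel₀ w.coe_ne_zero
    simpa only [mul_eq_zero, sub_eq_zero, ← Circle.coe_inv, Circle.coe_inj] using this
  · rintro (rfl | rfl)
    · rfl
    · rw [Circle.coe_inv_eq_conj, Complex.conj_re]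

lemma inner_eq_re_iff {a : Circle} {ξ η : Sph 2} :
    ⟪(ξ : Eucl 2), (η : Eucl 2)⟫ = (a : ℂ).re ↔ η = rotate a ξ ∨ ξ = rotate a η := by
  rw [inner_eq_re_circleCoord_div, circle_re_eq_re_iff, div_eq_iff_eq_mul, div_eq_iff_eq_mul,
    eq_inv_mul_iff_mul_eq, eq_comm (b := circleCoord ξ)]
  simp only [← circleCoord_rotate, circleCoord_injective.eq_iff]

lemma avoids_singleton_re_iff {a : Circle} {I : Set (Sph 2)} :
    Avoids {(a : ℂ).re} I ↔ Disjoint I (rotate a ⁻¹' I) := by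
  simp only [Avoids, Set.mem_singleton_iff, inner_eq_re_iff, Set.disjoint_left, Set.mem_preimage]
  constructor
  · exact fun h ξ hξ hrot => h ξ hξ _ hrot (.inl rfl)
  · rintro h ξ hξ η hη (rfl | rfl)
    exacts [h hξ hη, h hη hξ]

/-- The index modulo `q` of the sector containing `z` when the plane is cut into `q` equal sectors,
numbered counterclockwise from the positive real axis. -/
def sector (q : ℕ) (z : ℂ) : ZMod q := (⌊q * z.arg / (2 * Real.pi)⌋ : ℤ)

lemma measurable_sector (q : ℕ) : Measurable (sector q) :=
  (Measurable.of_discrete (f := ((↑) : ℤ → ZMod q))).comp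
    ((Complex.measurable_arg.const_mul _).div_const _).floor

lemma sector_circle_exp (q : ℕ) (θ : ℝ) :
    sector q (Circle.exp θ) = (⌊q * θ / (2 * Real.pi)⌋ : ℤ) := by
  obtain ⟨k, hk⟩ := Circle.exp_eq_exp.mp (Circle.exp_arg (Circle.exp θ))
  have shift :
      q * (θ + k * (2 * Real.pi)) / (2 * Real.pi) = q * θ / (2 * Real.pi) + (q * k : ℤ) := by
    push_cast
    field_simp
  rw [sector, hk, shift, Int.floor_add_intCast]
  simp

lemma sector_circle_exp_mul (p q : ℕ) [NeZero q] (z : Circle) :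
    sector q (Circle.exp (2 * Real.pi * (p / q)) * z) = sector q z + p := by
  have hq : (q : ℝ) ≠ 0 := NeZero.ne _
  have shift : q * (2 * Real.pi * (p / q) + (z : ℂ).arg) / (2 * Real.pi) =
      q * (z : ℂ).arg / (2 * Real.pi) + p := by
    field_simp
    ring
  rw [← Circle.coe_mul]
  nth_rw 1 [← Circle.exp_arg z]
  rw [← Circle.exp_add, sector_circle_exp, shift, Int.floor_add_natCast]
  simp [sector]

lemma exists_measurable_semiconj_rotate {p q : ℕ} [NeZero q] (hpq : p.Coprime q) :
    ∃ J : Sph 2 → ZMod q, Measurable J ∧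
      Function.Semiconj J (rotate (Circle.exp (2 * Real.pi * (p / q)))) (· + 1) := by
  refine ⟨fun ξ => sector q (circleCoord ξ) * (p : ZMod q)⁻¹, ?_, fun ξ => ?_⟩
  · exact ((measurable_sector q).comp
      (planeToComplex.continuous.comp continuous_subtype_val).measurable).mul_const _
  · simp only [circleCoord_rotate, Circle.coe_mul, sector_circle_exp_mul, add_mul,
      ZMod.coe_mul_inv_eq_one p hpq]

lemma circle_exp_two_pi_mul_div_pow (p q : ℕ) [NeZero q] :
    Circle.exp (2 * Real.pi * (p / q)) ^ q = 1 := by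
  have hq : (q : ℝ) ≠ 0 := NeZero.ne _
  rw [← Circle.exp_nsmul, Circle.exp_eq_one]
  refine ⟨p, ?_⟩
  simp only [nsmul_eq_mul, Int.cast_natCast]
  field_simp

end Rotation

lemma natCast_half_div_of_odd {q : ℕ} (hq : Odd q) :
    ((q / 2 : ℕ) : ℝ≥0∞) / q = ((q - 1 : ℕ) : ℝ≥0∞) / (2 * q) := by
  obtain ⟨n, rfl⟩ := hq
  rw [show (2 * n + 1) / 2 = n by omega, Nat.add_sub_cancel, Nat.cast_mul, Nat.cast_ofNat,
    ENNReal.mul_div_mul_left _ _ two_ne_zero ENNReal.ofNat_ne_top]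

theorem circle_sup_q_odd_general (x : ℝ) (hx : x ∈ Set.Icc (-1 : ℝ) 1) (p q : ℕ)
    (hpq : Nat.Coprime p q) (hq : q ≠ 0)
    (ht : Real.arccos x / (2 * Real.pi) = (p : ℝ) / (q : ℝ)) :
    IsGreatest {m : ℝ≥0∞ | ∃ I : Set (Sph 2),
      MeasurableSet I ∧ Avoids {x} I ∧ sphMeasure 2 I = m}
      (((q / 2 : ℕ) : ℝ≥0∞) / (q : ℝ≥0∞)) := by
  have : NeZero q := ⟨hq⟩
  obtain rfl : x = (Circle.exp (2 * Real.pi * (p / q)) : ℂ).re := by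
    rw [← ht, mul_div_cancel₀ _ Real.two_pi_pos.ne', Circle.coe_exp,
      Complex.exp_ofReal_mul_I_re, Real.cos_arccos hx.1 hx.2]
  obtain ⟨J, hJm, hJ⟩ := exists_measurable_semiconj_rotate hpq
  simp only [avoids_singleton_re_iff]
  exact isGreatest_measure_disjoint_preimage (measurePreserving_sphereMap_sphMeasure _)
    (isPeriodicPt_rotate (circle_exp_two_pi_mul_div_pow p q)) hJm hJ

/-- If `x ∈ [-1,1]` and `t = arccos x / (2π)` is rational, `t = p/q` with `p, q` coprime and
`q` odd, then the supremum of the normalised measures of measurable `{x}`-avoiding subsets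
of the unit circle `S^1` equals `(q-1)/(2q)`, and it is attained by some measurable
`{x}`-avoiding set. -/
theorem circle_sup_q_odd (x : ℝ) (hx : x ∈ Set.Icc (-1 : ℝ) 1) (p q : ℕ)
    (hpq : Nat.Coprime p q) (hqodd : Odd q)
    (ht : Real.arccos x / (2 * Real.pi) = (p : ℝ) / (q : ℝ)) :
    IsGreatest {m : ℝ≥0∞ | ∃ I : Set (Sph 2),
      MeasurableSet I ∧ Avoids {x} I ∧ sphMeasure 2 I = m}
      (((q - 1 : ℕ) : ℝ≥0∞) / (2 * (q : ℝ≥0∞))) := by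
  rw [← natCast_half_div_of_odd hqodd]
  exact circle_sup_q_odd_general x hx p q hpq hqodd.pos.ne' ht
end
end

section
/- Every Lebesgue measurable subset I of the unit sphere S² in ℝ³ such that no two vectors in I are orthogonal (i.e., ⟨ξ,η⟩ ≠ 0 for all ξ, η ∈ I) satisfies λ(I) < 0.313; consequently, the supremum α(3) of the normalized measures of measurable {0}-avoiding subsets of S² is strictly less than 0.313. -/
open MeasureTheory Metric Matrix Filter
open scoped RealInnerProductSpace ENNReal

noncomputable section

/-!
Take finitely many weighted points on the sphere such that every avoiding subfamily has weight at
most `B`. A random rotation moves each single point into `I` with probability `λ(I)`, and always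
moves an avoiding subfamily into `I`; comparing expected weights gives `W * λ(I) ≤ B`, where `W` is
the total weight. For orthogonality, the 37 lines spanned by the primitive integer vectors of
squared length at most 6, weighted according to length, achieve `B / W = 32 / 104 = 4 / 13`.
Since `ℝ³` embeds isometrically into `ℝⁿ`, the same points serve for every `n ≥ 3`.
-/

section Averaging

variable {Ω ι G X : Type*} [MeasurableSpace Ω]

theorem sum_mul_measure_le_of_forall_sum_indicator_le {μ : Measure Ω} [IsProbabilityMeasure μ]
    {s : Finset ι} {A : ι → Set Ω} {w : ι → ℝ≥0∞} {B : ℝ≥0∞}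
    (hA : ∀ i ∈ s, MeasurableSet (A i))
    (hB : ∀ ω, ∑ i ∈ s, (A i).indicator (fun _ => w i) ω ≤ B) :
    ∑ i ∈ s, w i * μ (A i) ≤ B :=
  calc ∑ i ∈ s, w i * μ (A i)
      = ∑ i ∈ s, ∫⁻ ω, (A i).indicator (fun _ => w i) ω ∂μ :=
        Finset.sum_congr rfl fun i hi => (lintegral_indicator_const (hA i hi) (w i)).symm
    _ = ∫⁻ ω, ∑ i ∈ s, (A i).indicator (fun _ => w i) ω ∂μ :=
        (lintegral_finsetSum s fun i hi => measurable_const.indicator (hA i hi)).symm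
    _ ≤ ∫⁻ _, B ∂μ := lintegral_mono hB
    _ = B := by rw [lintegral_const, measure_univ, mul_one]

theorem exists_isProbabilityMeasure_isMulRightInvariant (G : Type*) [Group G] [TopologicalSpace G]
    [IsTopologicalGroup G] [CompactSpace G] [MeasurableSpace G] [BorelSpace G] :
    ∃ μ : Measure G, IsProbabilityMeasure μ ∧ μ.IsMulRightInvariant := by
  let K : TopologicalSpace.PositiveCompacts G := ⊤
  have : IsProbabilityMeasure (Measure.haarMeasure K) := ⟨Measure.haarMeasure_self⟩
  exact ⟨(Measure.haarMeasure K).inv,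
    Measure.isProbabilityMeasure_map measurable_inv.aemeasurable, inferInstance⟩

theorem measurePreserving_smul_of_isPretransitive [Group G] [MeasurableSpace G] [MeasurableMul G]
    [MeasurableSpace X] [MulAction G X] [MulAction.IsPretransitive G X] [MeasurableSMul₂ G X]
    (μ : Measure G) [IsProbabilityMeasure μ] [μ.IsMulRightInvariant]
    (ν : Measure X) [IsProbabilityMeasure ν] [SMulInvariantMeasure G X ν] (x : X) :
    MeasurePreserving (fun g : G => g • x) μ ν := by
  refine ⟨measurable_smul_const x, Measure.ext fun A hA => ?_⟩
  rw [Measure.map_apply (measurable_smul_const x) hA]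
  have orbit_const (y : X) : μ {g | g • y ∈ A} = μ {g | g • x ∈ A} := by
    obtain ⟨h, rfl⟩ := MulAction.exists_smul_eq G x y
    simpa only [Set.preimage_ofPred_eq, mul_smul] using
      measure_preimage_mul_right μ h {g | g • x ∈ A}
  have action_meas : MeasurableSet {p : G × X | p.1 • p.2 ∈ A} := measurable_smul hA
  calc μ {g | g • x ∈ A}
      = ∫⁻ y, μ {g | g • y ∈ A} ∂ν := by
        simp only [orbit_const, lintegral_const, measure_univ, mul_one]
    _ = μ.prod ν {p | p.1 • p.2 ∈ A} := (Measure.prod_apply_symm action_meas).symm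
    _ = ∫⁻ g, ν ((g • ·) ⁻¹' A) ∂μ := Measure.prod_apply action_meas
    _ = ν A := by simp only [measure_preimage_smul, lintegral_const, measure_univ, mul_one]

end Averaging

section OrthogonalGroup

variable {E : Type*} [NormedAddCommGroup E] [InnerProductSpace ℝ E]

section Complete

variable [CompleteSpace E]

instance unitaryMulActionSphere (r : ℝ) : MulAction (unitary (E →L[ℝ] E)) (sphere (0 : E) r) where
  smul R x := ⟨R • (x : E), mem_sphere_zero_iff_norm.2 <|
    (Unitary.norm_map R x).trans (mem_sphere_zero_iff_norm.1 x.2)⟩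
  one_smul _ := rfl
  mul_smul _ _ _ := rfl

theorem coe_unitary_smul_sphere {r : ℝ} (R : unitary (E →L[ℝ] E)) (x : sphere (0 : E) r) :
    ((R • x : sphere (0 : E) r) : E) = R • (x : E) := rfl

instance unitaryContinuousSMulSphere (r : ℝ) :
    ContinuousSMul (unitary (E →L[ℝ] E)) (sphere (0 : E) r) where
  continuous_smul := Continuous.subtype_mk
    ((continuous_subtype_val.comp continuous_fst).clm_apply
      (continuous_subtype_val.comp continuous_snd)) _

instance unitaryIsPretransitiveSphere (r : ℝ) :
    MulAction.IsPretransitive (unitary (E →L[ℝ] E)) (sphere (0 : E) r) where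
  exists_smul_eq x y := by
    have norm_eq : ‖(x : E)‖ = ‖(y : E)‖ := by
      rw [mem_sphere_zero_iff_norm.1 x.2, mem_sphere_zero_iff_norm.1 y.2]
    exact ⟨Unitary.linearIsometryEquiv.symm (Submodule.reflection (ℝ ∙ ((x : E) - y))ᗮ),
      Subtype.ext (Submodule.reflection_sub norm_eq)⟩

instance continuousStarContinuousLinearMap : ContinuousStar (E →L[ℝ] E) :=
  ⟨ContinuousLinearMap.adjoint.continuous⟩

end Complete

variable [FiniteDimensional ℝ E]

instance unitaryCompactSpace : CompactSpace (unitary (E →L[ℝ] E)) := by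
  have : ProperSpace (E →L[ℝ] E) := FiniteDimensional.proper ℝ _
  refine isCompact_iff_compactSpace.1 (isCompact_of_isClosed_isBounded isClosed_unitary
    (isBounded_iff_forall_norm_le.2 ⟨1, fun R hR => ?_⟩))
  exact R.opNorm_le_bound zero_le_one fun x => by
    rw [one_mul, ContinuousLinearMap.norm_map_of_mem_unitary hR]

variable [MeasurableSpace E] [BorelSpace E]

instance unitarySMulInvariantVolume :
    SMulInvariantMeasure (unitary (E →L[ℝ] E)) E volume where
  measure_preimage_smul R _ hs :=
    (Unitary.linearIsometryEquiv R).measurePreserving.measure_preimage hs.nullMeasurableSet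

open scoped Pointwise in
instance unitarySMulInvariantToSphere (μ : Measure E)
    [SMulInvariantMeasure (unitary (E →L[ℝ] E)) E μ] :
    SMulInvariantMeasure (unitary (E →L[ℝ] E)) (sphere (0 : E) 1) μ.toSphere where
  measure_preimage_smul R s hs := by
    have coe_image : ((↑) '' (R⁻¹ • s) : Set E) = R⁻¹ • ((↑) '' s) :=
      Set.image_smul_comm _ _ _ fun x => coe_unitary_smul_sphere R⁻¹ x
    rw [Measure.toSphere_apply' _ (measurable_const_smul R hs), Measure.toSphere_apply' _ hs,
      Set.preimage_smul, coe_image, smul_comm, measure_smul]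

end OrthogonalGroup

section SphereMeasure

variable {n : ℕ} {X : Set ℝ} {I : Set (Sph n)}

instance sphMeasureIsProbabilityMeasure [NeZero n] : IsProbabilityMeasure (sphMeasure n) where
  measure_univ := by
    rw [sphMeasure, Measure.smul_apply, smul_eq_mul]
    refine ENNReal.inv_mul_cancel ?_ (measure_ne_top _ _)
    exact Measure.measure_univ_eq_zero.not.2 (Measure.toSphere_ne_zero _)

instance sphMeasureSMulInvariant :
    SMulInvariantMeasure (unitary (Eucl n →L[ℝ] Eucl n)) (Sph n) (sphMeasure n) :=
  inferInstanceAs (SMulInvariantMeasure _ _ (_ • _))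

theorem Avoids.mono {J : Set (Sph n)} (hI : Avoids X I) (hJI : J ⊆ I) : Avoids X J :=
  fun ξ hξ η hη => hI ξ (hJI hξ) η (hJI hη)

theorem Avoids.preimage_smul (hI : Avoids X I) (R : unitary (Eucl n →L[ℝ] Eucl n)) :
    Avoids X ((R • ·) ⁻¹' I) := fun ξ hξ η hη hX =>
  hI _ hξ _ hη <| by rwa [← Unitary.inner_map_map R] at hX

open Classical in
theorem sum_mul_sphMeasure_le_of_avoids [NeZero n] {ι : Type*} {s : Finset ι} {w : ι → ℝ≥0∞}
    {B : ℝ≥0∞} (v : ι → Sph n) (hB : ∀ T ⊆ s, Avoids X (v '' T) → ∑ i ∈ T, w i ≤ B)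
    (hI : MeasurableSet I) (hIav : Avoids X I) :
    (∑ i ∈ s, w i) * sphMeasure n I ≤ B := by
  obtain ⟨μ, _, _⟩ :=
    exists_isProbabilityMeasure_isMulRightInvariant (unitary (Eucl n →L[ℝ] Eucl n))
  have hit (i : ι) := measurePreserving_smul_of_isPretransitive μ (sphMeasure n) (v i)
  calc (∑ i ∈ s, w i) * sphMeasure n I
      = ∑ i ∈ s, w i * μ ((· • v i) ⁻¹' I) := by
        simp only [(hit _).measure_preimage hI.nullMeasurableSet, Finset.sum_mul]
    _ ≤ B := sum_mul_measure_le_of_forall_sum_indicator_le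
        (fun i _ => (hit i).measurable hI) fun R => ?_
  simp only [Set.indicator_apply, ← Finset.sum_filter]
  refine hB _ (Finset.filter_subset _ _) ((hIav.preimage_smul R).mono ?_)
  rintro _ ⟨i, hi, rfl⟩
  exact (Finset.mem_filter.1 hi).2

end SphereMeasure

section IntegerConfigurations

variable {ι E : Type*} [Fintype ι] [NormedAddCommGroup E] [InnerProductSpace ℝ E] {e : ι → E}

/-- The vector of `E` with integer coordinates `p` in the family `e`. -/
def latticeVector (e : ι → E) (p : ι → ℤ) : E := ∑ i, (p i : ℝ) • e i

theorem inner_latticeVector (he : Orthonormal ℝ e) (p q : ι → ℤ) :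
    ⟪latticeVector e p, latticeVector e q⟫ = (p ⬝ᵥ q : ℤ) := by
  simp only [latticeVector, he.inner_sum, conj_trivial, dotProduct, Int.cast_sum, Int.cast_mul]

theorem latticeVector_ne_zero (he : Orthonormal ℝ e) {p : ι → ℤ} (hp : p ≠ 0) :
    latticeVector e p ≠ 0 := by
  rw [← inner_self_ne_zero (𝕜 := ℝ), inner_latticeVector he]
  exact_mod_cast dotProduct_self_eq_zero.not.2 hp

/-- The point of the unit sphere in the direction of a nonzero `latticeVector`. -/
def latticeDirection (he : Orthonormal ℝ e) (p : ι → ℤ) (hp : p ≠ 0) : sphere (0 : E) 1 :=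
  ⟨‖latticeVector e p‖⁻¹ • latticeVector e p,
    mem_sphere_zero_iff_norm.2 (norm_smul_inv_norm (𝕜 := ℝ) (latticeVector_ne_zero he hp))⟩

theorem inner_latticeDirection_eq_zero (he : Orthonormal ℝ e) {p q : ι → ℤ} (hp : p ≠ 0)
    (hq : q ≠ 0) (hpq : p ⬝ᵥ q = 0) :
    ⟪(latticeDirection he p hp : E), latticeDirection he q hq⟫ = 0 := by
  simp only [latticeDirection, real_inner_smul_left, real_inner_smul_right,
    inner_latticeVector he, hpq, Int.cast_zero, mul_zero]

theorem sum_mul_sphMeasure_le_of_integer_configuration {m n : ℕ} [NeZero n] (hmn : m ≤ n)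
    {s : Finset (Fin m → ℤ)} (hs : 0 ∉ s) {w : (Fin m → ℤ) → ℕ} {B : ℕ}
    (hB : ∀ T ⊆ s, (T : Set (Fin m → ℤ)).Pairwise (fun p q => p ⬝ᵥ q ≠ 0) → ∑ p ∈ T, w p ≤ B)
    {I : Set (Sph n)} (hI : MeasurableSet I) (hIav : Avoids {0} I) :
    (∑ p ∈ s, w p : ℕ) * sphMeasure n I ≤ B := by
  have he : Orthonormal ℝ (EuclideanSpace.basisFun (Fin n) ℝ ∘ Fin.castLE hmn) :=
    (EuclideanSpace.basisFun (Fin n) ℝ).orthonormal.comp _ (Fin.castLE_injective hmn)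
  have hne (p : s) : (p : Fin m → ℤ) ≠ 0 := ne_of_mem_of_not_mem p.2 hs
  rw [← Finset.sum_coe_sort, Nat.cast_sum]
  refine sum_mul_sphMeasure_le_of_avoids (fun p : s => latticeDirection he p (hne p))
    (fun T _ hT => ?_) hI hIav
  have hTw := hB (T.map (Function.Embedding.subtype _)) (Finset.map_subtype_subset T) <| by
    rintro p hp q hq - hpq
    obtain ⟨p, hpT, rfl⟩ := Finset.mem_map.1 hp
    obtain ⟨q, hqT, rfl⟩ := Finset.mem_map.1 hq
    exact hT _ (Set.mem_image_of_mem _ hpT) _ (Set.mem_image_of_mem _ hqT)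
      (inner_latticeDirection_eq_zero he (hne p) (hne q) hpq)
  rw [Finset.sum_map] at hTw
  exact_mod_cast hTw

end IntegerConfigurations

section BranchAndBound

variable {α : Type*}

/-- A branch and bound test that the `adj`-independent sets of vertices in a list have weight at
most `B`: either the whole list does, or the sets without and with its first vertex pass the test.
The first explicit `ℕ` bounds the depth of the recursion; running out of it fails the test. -/
def indepWeightLE (adj : α → α → Prop) [DecidableRel adj] (w : α → ℕ) : ℕ → List α → ℕ → Bool
  | _, [], _ => true
  | 0, _ :: _, _ => false
  | n + 1, v :: L, B =>
    ((v :: L).map w).sum ≤ B ||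
      (indepWeightLE adj w n L B &&
        (w v ≤ B && indepWeightLE adj w n (L.filter (¬ adj v ·)) (B - w v)))

theorem sum_le_sum_map_of_forall_mem {M : Type*} [AddCommMonoid M] [Preorder M]
    [CanonicallyOrderedAdd M] {f : α → M} {T : Finset α} {L : List α} (hTL : ∀ u ∈ T, u ∈ L) :
    ∑ u ∈ T, f u ≤ (L.map f).sum := by
  have hle : T.val ≤ (L : Multiset α) := (Multiset.le_iff_subset T.nodup).2 fun u hu => hTL u hu
  obtain ⟨R, hR⟩ := Multiset.le_iff_exists_add.1 hle
  calc ∑ u ∈ T, f u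
      ≤ (T.val.map f).sum + (R.map f).sum := le_self_add
    _ = (L.map f).sum := by
      rw [← Multiset.sum_add, ← Multiset.map_add, ← hR, Multiset.map_coe, Multiset.sum_coe]

theorem sum_le_of_indepWeightLE {adj : α → α → Prop} [DecidableRel adj] {w : α → ℕ} {n : ℕ}
    {L : List α} {B : ℕ} (h : indepWeightLE adj w n L B) {T : Finset α}
    (hTL : ∀ u ∈ T, u ∈ L) (hT : (T : Set α).Pairwise (¬ adj · ·)) :
    ∑ u ∈ T, w u ≤ B := by
  classical
  induction n, L, B using indepWeightLE.induct adj w generalizing T with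
  | case1 => simp [Finset.eq_empty_of_forall_notMem fun u hu => List.not_mem_nil (hTL u hu)]
  | case2 => simp [indepWeightLE] at h
  | case3 n v L B ih_skip ih_take =>
    simp only [indepWeightLE, Bool.or_eq_true, Bool.and_eq_true, decide_eq_true_eq] at h
    rcases h with h | ⟨hskip, hv, htake⟩
    · exact (sum_le_sum_map_of_forall_mem hTL).trans h
    by_cases hvT : v ∈ T
    · have hrest : ∑ u ∈ T.erase v, w u ≤ B - w v := by
        refine ih_take htake (fun u hu => ?_) (hT.mono (Finset.erase_subset v T))
        obtain ⟨huv, huT⟩ := Finset.mem_erase.1 hu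
        exact List.mem_filter.2 ⟨(List.mem_cons.1 (hTL u huT)).resolve_left huv,
          decide_eq_true (hT hvT huT huv.symm)⟩
      rw [← Finset.add_sum_erase T w hvT]
      lia
    · refine ih_skip hskip (fun u hu => ?_) hT
      exact (List.mem_cons.1 (hTL u hu)).resolve_left (ne_of_mem_of_not_mem hu hvT)

end BranchAndBound

section Rays

/-- One vector on each line spanned by a primitive integer vector `p` with `p ⬝ᵥ p ≤ 6`. -/
def rays : List (Fin 3 → ℤ) :=
  [![1, 0, 0], ![0, 1, 0], ![0, 0, 1],
    ![0, 1, 1], ![0, 1, -1], ![1, 0, 1], ![1, 0, -1], ![1, 1, 0], ![1, -1, 0],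
    ![1, 1, 1], ![1, 1, -1], ![1, -1, 1], ![1, -1, -1],
    ![0, 1, 2], ![0, 1, -2], ![0, 2, 1], ![0, 2, -1],
    ![1, 0, 2], ![1, 0, -2], ![2, 0, 1], ![2, 0, -1],
    ![1, 2, 0], ![1, -2, 0], ![2, 1, 0], ![2, -1, 0],
    ![1, 1, 2], ![1, 1, -2], ![1, -1, 2], ![1, -1, -2],
    ![1, 2, 1], ![1, 2, -1], ![1, -2, 1], ![1, -2, -1],
    ![2, 1, 1], ![2, 1, -1], ![2, -1, 1], ![2, -1, -1]]

/-- The weights of the `rays`, constant on the orbits of the symmetry group of the cube. -/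
def rayWeight (p : Fin 3 → ℤ) : ℕ :=
  if p ⬝ᵥ p = 1 then 8 else if p ⬝ᵥ p = 2 then 6 else if p ⬝ᵥ p = 3 then 5 else 1

theorem zero_notMem_rays : 0 ∉ rays := by decide +kernel

theorem sum_rayWeight : ∑ p ∈ rays.toFinset, rayWeight p = 104 := by decide +kernel

theorem sum_rayWeight_le_of_pairwise {T : Finset (Fin 3 → ℤ)} (hT : T ⊆ rays.toFinset)
    (hpair : (T : Set (Fin 3 → ℤ)).Pairwise (fun p q => p ⬝ᵥ q ≠ 0)) :
    ∑ p ∈ T, rayWeight p ≤ 32 := by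
  have hsearch : indepWeightLE (fun p q : Fin 3 → ℤ => p ⬝ᵥ q = 0) rayWeight 37 rays 32 := by
    decide +kernel
  exact sum_le_of_indepWeightLE hsearch (fun p hp => List.mem_toFinset.1 (hT hp)) hpair

end Rays

theorem measure_orthogonality_avoiding_lt_general {n : ℕ} (hn : 3 ≤ n) (I : Set (Sph n))
    (hI : MeasurableSet I) (hIav : Avoids {0} I) : sphMeasure n I ≤ 4 / 13 := by
  have : NeZero n := ⟨by lia⟩
  have h := sum_mul_sphMeasure_le_of_integer_configuration hn
    (List.mem_toFinset.not.2 zero_notMem_rays) (fun _ => sum_rayWeight_le_of_pairwise) hI hIav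
  rw [sum_rayWeight] at h
  have h8 : (8 : ℝ≥0∞) * (sphMeasure n I * 13) ≤ 8 * 4 := by
    convert h using 1
    · push_cast; ring
    · norm_num
  rw [ENNReal.le_div_iff_mul_le (by simp) (by simp)]
  exact (ENNReal.mul_le_mul_iff_right (by simp) (by simp)).1 h8

/-- **Theorem.** Every measurable subset `I` of the unit sphere `S²` in `ℝ³` in which no two
vectors are orthogonal satisfies `λ(I) < 0.313`; consequently `α(3) < 0.313`. -/
theorem measure_orthogonality_avoiding_lt (I : Set (Sph 3)) (hI : MeasurableSet I)
    (hIav : Avoids {0} I) :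
    sphMeasure 3 I < ENNReal.ofReal 0.313 :=
  (measure_orthogonality_avoiding_lt_general le_rfl I hI hIav).trans_lt <| by
    rw [ENNReal.lt_ofReal_iff_toReal_lt (by finiteness)]
    norm_num
end
end

section
/- Let n ≥ 3 and let X be an arbitrary subset of [-1,1], with topological closure X̄ in [-1,1]. Then α_X(n) = α_{X̄}(n); that is, the supremum of λ(I) over Lebesgue measurable X-avoiding sets I ⊆ S^{n-1} equals the supremum over Lebesgue measurable X̄-avoiding sets. In particular, if 1 ∈ X̄ then α_X(n) = 0. -/
open MeasureTheory Metric Matrix Filter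
open scoped RealInnerProductSpace ENNReal

noncomputable section

/-!
The orthogonal group `G` acts on the sphere transitively and preserves both the surface measure `σ`
and inner products, so every translate `g • I` of an `X`-avoiding set `I` is again `X`-avoiding.
Since `σ (I \ g • I) → 0` as `g → 1`, Markov's inequality and the Borel–Cantelli lemma show that
along a suitable sequence of neighbourhoods of `1` almost every point of `I` eventually lies in
`g • I` for more than half of the `g` in the neighbourhood. Two such points `x`, `y` have a
translate in common, and invariance of Haar measure makes this stable: for every `h` near `1`, some
`g • I` contains both `x` and `h • y`. As the points `h • y` fill a neighbourhood of `y`, no value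
of `⟪x, ·⟫` close to `⟪x, y⟫` is in `X`. Hence deleting a null set from `I` leaves a
`closure X`-avoiding set.
-/

open scoped Topology Pointwise

section MajoritySet

variable {G S : Type*} [Group G] [MulAction G S] [MeasurableSpace G]

/-- The points of `S` that lie in the translate `g • A` for more than half of the `g ∈ U`, as
measured by `ν`; for small neighbourhoods `U` of `1` they play the role of density points of `A`.
The condition bounds the measure of the exceptional `g`, which says the same when `ν U` is finite
and the sets involved are measurable. -/
def majoritySet (ν : Measure G) (U : Set G) (A : Set S) : Set S :=
  {x | ν {g ∈ U | x ∉ g • A} < ν U / 2}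

theorem exists_mem_smul_of_mem_majoritySet {ν : Measure G} {U : Set G} {A : Set S} {x y : S}
    (hx : x ∈ majoritySet ν U A) (hy : y ∈ majoritySet ν U A) :
    ∃ g : G, x ∈ g • A ∧ y ∈ g • A := by
  by_contra! hxy
  have hU : U ⊆ {g ∈ U | x ∉ g • A} ∪ {g ∈ U | y ∉ g • A} := fun g hg => by
    by_cases hgx : x ∈ g • A
    · exact .inr ⟨hg, hxy g hgx⟩
    · exact .inl ⟨hg, hgx⟩
  exact lt_irrefl (ν U) <| calc
    ν U ≤ ν {g ∈ U | x ∉ g • A} + ν {g ∈ U | y ∉ g • A} :=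
      (measure_mono hU).trans (measure_union_le _ _)
    _ < ν U / 2 + ν U / 2 := ENNReal.add_lt_add hx hy
    _ = ν U := ENNReal.add_halves _

variable [MeasurableSpace S] [MeasurableInv G] [MeasurableSMul₂ G S] {ν : Measure G} [SFinite ν]
  {U : Set G} {A : Set S}

theorem measurableSet_notMem_smul (hU : MeasurableSet U) (hA : MeasurableSet A) :
    MeasurableSet {p : S × G | p.2 ∈ U ∧ p.1 ∉ p.2 • A} := by
  simp only [Set.mem_smul_set_iff_inv_smul_mem]
  exact (measurable_snd hU).inter ((measurable_snd.inv.smul measurable_fst) hA.compl)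

theorem measurable_measure_notMem_smul (hU : MeasurableSet U) (hA : MeasurableSet A) :
    Measurable fun x : S => ν {g ∈ U | x ∉ g • A} :=
  measurable_measure_prodMk_left (measurableSet_notMem_smul hU hA)

theorem measurableSet_majoritySet (hU : MeasurableSet U) (hA : MeasurableSet A) :
    MeasurableSet (majoritySet ν U A) :=
  measurableSet_lt (measurable_measure_notMem_smul hU hA) measurable_const

variable {σ : Measure S} [SFinite σ] {ε : ℝ≥0∞}

theorem setLIntegral_measure_notMem_smul_le (hU : MeasurableSet U) (hA : MeasurableSet A)
    (hε : ∀ g ∈ U, σ (A \ g • A) ≤ ε) :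
    ∫⁻ x in A, ν {g ∈ U | x ∉ g • A} ∂σ ≤ ε * ν U := by
  have hN := measurableSet_notMem_smul hU hA
  calc ∫⁻ x in A, ν {g ∈ U | x ∉ g • A} ∂σ
      = ((σ.restrict A).prod ν) {p | p.2 ∈ U ∧ p.1 ∉ p.2 • A} := (Measure.prod_apply hN).symm
    _ = ∫⁻ g, σ.restrict A {x | g ∈ U ∧ x ∉ g • A} ∂ν := Measure.prod_apply_symm hN
    _ ≤ ∫⁻ g, U.indicator (fun _ => ε) g ∂ν := by
      refine lintegral_mono fun g => ?_
      by_cases hg : g ∈ U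
      · simpa [hg, Measure.restrict_apply' hA, Set.sdiff_eq, Set.inter_comm, Set.compl_def]
          using hε g hg
      · simp [hg]
    _ = ε * ν U := lintegral_indicator_const hU ε

theorem measure_sdiff_majoritySet_le (hU : MeasurableSet U) (hU₀ : ν U ≠ 0) (hU_top : ν U ≠ ∞)
    (hA : MeasurableSet A) (hε : ∀ g ∈ U, σ (A \ g • A) ≤ ε) :
    σ (A \ majoritySet ν U A) ≤ 2 * ε := by
  have hcompl : A \ majoritySet ν U A = {x | ν U / 2 ≤ ν {g ∈ U | x ∉ g • A}} ∩ A := by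
    ext x
    simp [majoritySet, and_comm]
  calc σ (A \ majoritySet ν U A)
      = σ.restrict A {x | ν U / 2 ≤ ν {g ∈ U | x ∉ g • A}} := by
        rw [Measure.restrict_apply' hA, hcompl]
    _ ≤ (∫⁻ x in A, ν {g ∈ U | x ∉ g • A} ∂σ) / (ν U / 2) :=
        meas_ge_le_lintegral_div (measurable_measure_notMem_smul hU hA).aemeasurable
          (by simpa using hU₀) (ENNReal.div_ne_top hU_top two_ne_zero)
    _ ≤ ε * ν U / (ν U / 2) := by gcongr; exact setLIntegral_measure_notMem_smul_le hU hA hε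
    _ = 2 * ε := by
        rw [div_eq_mul_inv, ENNReal.inv_div (by simp) (by simp), mul_assoc,
          ENNReal.mul_div_cancel hU₀ hU_top, mul_comm]

end MajoritySet

section Translation

variable {G S : Type*} [Group G] [TopologicalSpace G] [IsTopologicalGroup G] [MulAction G S]
  [TopologicalSpace S] [R1Space S] [ContinuousSMul G S] [MeasurableSpace S] [BorelSpace S]
  {σ : Measure S} [IsLocallyFiniteMeasure σ] [σ.InnerRegularCompactLTTop]
  [SMulInvariantMeasure G S σ] {A : Set S}

theorem tendsto_measure_sdiff_smul (hA : MeasurableSet A) (hA_top : σ A ≠ ∞) :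
    Tendsto (fun g : G => σ (A \ g • A)) (𝓝 1) (𝓝 0) := by
  let act : C(G × S, S) := ⟨fun p => p.1⁻¹ • p.2, by fun_prop⟩
  have hact (g : G) : MeasurePreserving (act.curry g) σ σ := measurePreserving_smul g⁻¹ σ
  have h := tendsto_measure_symmDiff_preimage_nhds_zero (act.curry.continuous.tendsto 1)
    (.of_forall hact) (hact 1) hA.nullMeasurableSet hA_top
  refine tendsto_of_tendsto_of_tendsto_of_le_of_le tendsto_const_nhds h (fun _ => zero_le)
    fun g => measure_mono ?_
  rintro x ⟨hx, hgx⟩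
  rw [Set.mem_smul_set_iff_inv_smul_mem] at hgx
  exact .inr ⟨by simpa [act] using hx, hgx⟩

end Translation

section LeftTranslation

variable {G S : Type*} [Group G] [TopologicalSpace G] [IsTopologicalGroup G] [MeasurableSpace G]
  [BorelSpace G] {ν : Measure G} [ν.IsMulLeftInvariant] [IsLocallyFiniteMeasure ν]
  [ν.InnerRegularCompactLTTop] [MulAction G S] {U : Set G} {A : Set S}

theorem eventually_smul_mem_majoritySet (hU : MeasurableSet U) (hU_top : ν U ≠ ∞) {x : S}
    (hx : x ∈ majoritySet ν U A) : ∀ᶠ h in 𝓝 (1 : G), h • x ∈ majoritySet ν U A := by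
  filter_upwards [(tendsto_measure_sdiff_smul hU hU_top).eventually_lt_const
    (tsub_pos_of_lt hx)] with h hh
  have hsub : {g ∈ U | h • x ∉ g • A} ⊆ U \ h • U ∪ h • {g ∈ U | x ∉ g • A} := by
    rintro g ⟨hgU, hgx⟩
    by_cases hg : g ∈ h • U
    · obtain ⟨k, hk, rfl⟩ := hg
      refine .inr (Set.smul_mem_smul_set ⟨hk, fun hkx => hgx ?_⟩)
      rw [smul_assoc]
      exact Set.smul_mem_smul_set hkx
    · exact .inl ⟨hgU, hg⟩
  calc ν {g ∈ U | h • x ∉ g • A}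
      ≤ ν (U \ h • U) + ν (h • {g ∈ U | x ∉ g • A}) :=
        (measure_mono hsub).trans (measure_union_le _ _)
    _ = ν (U \ h • U) + ν {g ∈ U | x ∉ g • A} := by rw [measure_smul]
    _ < ν U / 2 := lt_tsub_iff_right.1 hh

end LeftTranslation

section ContinuousAction

variable {G S : Type*} [Group G] [TopologicalSpace G] [IsTopologicalGroup G] [MulAction G S]
  [TopologicalSpace S] [R1Space S] [ContinuousSMul G S] [MeasurableSpace S] [BorelSpace S]
  {σ : Measure S} [IsLocallyFiniteMeasure σ] [σ.InnerRegularCompactLTTop]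
  [SMulInvariantMeasure G S σ] [SecondCountableTopology G] [SFinite σ] {A : Set S}

theorem exists_isOpen_measure_sdiff_majoritySet_le [MeasurableSpace G] [BorelSpace G]
    {ν : Measure G} [IsLocallyFiniteMeasure ν] [ν.IsOpenPosMeasure] (hA : MeasurableSet A)
    (hA_top : σ A ≠ ∞) {ε : ℝ≥0∞} (hε : ε ≠ 0) :
    ∃ U : Set G, IsOpen U ∧ ν U ≠ ∞ ∧ σ (A \ majoritySet ν U A) ≤ 2 * ε := by
  have hsmall : ∀ᶠ g in 𝓝 (1 : G), σ (A \ g • A) ≤ ε :=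
    (tendsto_measure_sdiff_smul hA hA_top).eventually_le_const hε.bot_lt
  obtain ⟨V, hV, hV_open, hV_one⟩ := eventually_nhds_iff.1 hsmall
  obtain ⟨W, hW_one, hW_open, hW_top⟩ := ν.exists_isOpen_measure_lt_top 1
  have hU_open : IsOpen (V ∩ W) := hV_open.inter hW_open
  have hU_top : ν (V ∩ W) ≠ ∞ := measure_ne_top_of_subset Set.inter_subset_right hW_top.ne
  exact ⟨V ∩ W, hU_open, hU_top, measure_sdiff_majoritySet_le hU_open.measurableSet
    (hU_open.measure_ne_zero ν ⟨1, hV_one, hW_one⟩) hU_top hA fun g hg => hV g hg.1⟩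

variable (G) in
theorem exists_conull_forall_eventually_mem_smul [LocallyCompactSpace G] (hA : MeasurableSet A)
    (hA_top : σ A ≠ ∞) :
    ∃ J ⊆ A, MeasurableSet J ∧ σ (A \ J) = 0 ∧
      ∀ x ∈ J, ∀ y ∈ J, ∀ᶠ h in 𝓝 (1 : G), ∃ g : G, x ∈ g • A ∧ h • y ∈ g • A := by
  borelize G
  let ν : Measure G := Measure.haar
  obtain ⟨ε, hε, hε_sum⟩ := ENNReal.exists_pos_sum_of_countable' one_ne_zero ℕ
  choose U hU_open hU_top hU using fun k =>
    exists_isOpen_measure_sdiff_majoritySet_le (ν := ν) (G := G) hA hA_top (hε k).ne'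
  have hU_meas (k : ℕ) : MeasurableSet (U k) := (hU_open k).measurableSet
  let M (k : ℕ) : Set S := majoritySet ν (U k) A
  refine ⟨A ∩ liminf M atTop, Set.inter_subset_left, hA.inter <|
    .measurableSet_liminf fun k => measurableSet_majoritySet (hU_meas k) hA, ?_, ?_⟩
  · have hsum : ∑' k, σ (A \ M k) ≠ ∞ := ne_top_of_le_ne_top
      (ENNReal.mul_ne_top ENNReal.ofNat_ne_top hε_sum.ne_top)
      ((ENNReal.tsum_le_tsum hU).trans_eq ENNReal.tsum_mul_left)
    have hlimsup : A \ (A ∩ liminf M atTop) = limsup (fun k => A \ M k) atTop := by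
      rw [Set.sdiff_self_inter, sdiff_liminf]
    rw [hlimsup]
    exact measure_limsup_atTop_eq_zero hsum
  · rintro x ⟨-, hx⟩ y ⟨-, hy⟩
    rw [mem_liminf_iff_eventually_mem] at hx hy
    obtain ⟨k, hxk, hyk⟩ := (hx.and hy).exists
    filter_upwards [eventually_smul_mem_majoritySet (hU_meas k) (hU_top k) hyk] with h hhy
    exact exists_mem_smul_of_mem_majoritySet hxk hhy

end ContinuousAction

section OrthogonalGroup

variable {E : Type*} [NormedAddCommGroup E] [InnerProductSpace ℝ E]

section Complete

variable [CompleteSpace E]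

/-- The orthogonal group of `E`, encoded as the unitary elements of `E →L[ℝ] E`, acts on the unit
sphere of `E`. -/
instance mulActionUnitarySphere : MulAction (unitary (E →L[ℝ] E)) (sphere (0 : E) 1) where
  smul g x := ⟨(g : E →L[ℝ] E) x, by
    rw [mem_sphere_zero_iff_norm, Unitary.norm_map, norm_eq_of_mem_sphere]⟩
  one_smul _ := rfl
  mul_smul _ _ _ := rfl

instance continuousSMul_unitary_sphere :
    ContinuousSMul (unitary (E →L[ℝ] E)) (sphere (0 : E) 1) where
  continuous_smul := Continuous.subtype_mk
    ((continuous_subtype_val.comp continuous_fst).clm_apply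
      (continuous_subtype_val.comp continuous_snd)) _

theorem inner_unitary_smul_smul (g : unitary (E →L[ℝ] E)) (x y : sphere (0 : E) 1) :
    ⟪((g • x : sphere (0 : E) 1) : E), ((g • y : sphere (0 : E) 1) : E)⟫ = ⟪(x : E), (y : E)⟫ :=
  Unitary.inner_map_map g x y

instance isPretransitive_unitary_sphere :
    MulAction.IsPretransitive (unitary (E →L[ℝ] E)) (sphere (0 : E) 1) where
  exists_smul_eq x y := by
    have hxy : ‖(x : E)‖ = ‖(y : E)‖ := by rw [norm_eq_of_mem_sphere, norm_eq_of_mem_sphere]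
    exact ⟨Unitary.linearIsometryEquiv.symm (ℝ ∙ ((x : E) - y))ᗮ.reflection,
      Subtype.ext (Submodule.reflection_sub hxy)⟩

theorem preimage_unitary_Ioo_smul_image_coe (g : unitary (E →L[ℝ] E)) (s : Set (sphere (0 : E) 1)) :
    (g : E →L[ℝ] E) ⁻¹' (Set.Ioo (0 : ℝ) 1 • ((↑) '' s)) =
      Set.Ioo (0 : ℝ) 1 • ((↑) '' ((g • ·) ⁻¹' s)) := by
  ext x
  constructor
  · rintro ⟨r, hr, _, ⟨y, hy, rfl⟩, hxy⟩
    refine ⟨r, hr, _, ⟨g⁻¹ • y, by simpa using hy, rfl⟩,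
      (Unitary.linearIsometryEquiv g).injective ?_⟩
    calc (g : E →L[ℝ] E) (r • ((g⁻¹ • y : sphere (0 : E) 1) : E))
        = r • ((g • g⁻¹ • y : sphere (0 : E) 1) : E) := map_smul _ _ _
      _ = r • (y : E) := by rw [smul_inv_smul]
      _ = (g : E →L[ℝ] E) x := hxy
  · rintro ⟨r, hr, _, ⟨y, hy, rfl⟩, rfl⟩
    exact ⟨r, hr, _, ⟨g • y, hy, rfl⟩, (map_smul (g : E →L[ℝ] E) r (y : E)).symm⟩

end Complete

variable [FiniteDimensional ℝ E]

instance compactSpace_unitary : CompactSpace (unitary (E →L[ℝ] E)) := by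
  refine isCompact_iff_compactSpace.1 (isCompact_of_isClosed_isBounded isClosed_unitary ?_)
  refine isBounded_iff_forall_norm_le.2 ⟨1, fun g hg =>
    ContinuousLinearMap.opNorm_le_bound _ zero_le_one fun x => ?_⟩
  rw [one_mul]
  exact (Unitary.norm_map ⟨g, hg⟩ x).le

variable [MeasurableSpace E] [BorelSpace E]

instance smulInvariantMeasure_toSphere :
    SMulInvariantMeasure (unitary (E →L[ℝ] E)) (sphere (0 : E) 1)
      (volume : Measure E).toSphere where
  measure_preimage_smul g s hs := by
    rw [Measure.toSphere_apply' _ hs, Measure.toSphere_apply' _ (measurable_const_smul g hs),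
      ← preimage_unitary_Ioo_smul_image_coe]
    congr 1
    exact (Unitary.linearIsometryEquiv g).measurePreserving.measure_preimage_equiv
      (f := (Unitary.linearIsometryEquiv g).toMeasurableEquiv) _

end OrthogonalGroup

section SphereInner

variable {E : Type*} [NormedAddCommGroup E] [InnerProductSpace ℝ E]

theorem exists_norm_eq_one_inner_eq_zero (hE : 1 < Module.rank ℝ E) (x : E) :
    ∃ v : E, ‖v‖ = 1 ∧ ⟪x, v⟫ = 0 := by
  have hne : (ℝ ∙ x)ᗮ ≠ ⊥ := fun hbot => hE.not_ge <| by
    rw [← rank_top, ← Submodule.orthogonal_eq_bot_iff.1 hbot]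
    simpa using rank_span_le (R := ℝ) {x}
  have := Submodule.nontrivial_iff_ne_bot.2 hne
  obtain ⟨v, hv⟩ := exists_norm_eq (ℝ ∙ x)ᗮ zero_le_one
  exact ⟨v, hv, Submodule.mem_orthogonal_singleton_iff_inner_right.1 v.2⟩

theorem norm_smul_add_sqrt_smul {x v : E} (hx : ‖x‖ = 1) (hv : ‖v‖ = 1) (hxv : ⟪x, v⟫ = 0)
    {t : ℝ} (ht : t ∈ Set.Icc (-1) 1) : ‖t • x + √(1 - t ^ 2) • v‖ = 1 := by
  have ht' : 0 ≤ 1 - t ^ 2 := by nlinarith [ht.1, ht.2]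
  have horth : ⟪t • x, √(1 - t ^ 2) • v⟫ = 0 := by
    rw [real_inner_smul_left, real_inner_smul_right, hxv, mul_zero, mul_zero]
  rw [← sq_eq_sq₀ (norm_nonneg _) zero_le_one, sq,
    norm_add_sq_eq_norm_sq_add_norm_sq_of_inner_eq_zero _ _ horth, norm_smul, norm_smul, hx, hv,
    Real.norm_of_nonneg (Real.sqrt_nonneg _), Real.norm_eq_abs]
  linear_combination Real.mul_self_sqrt ht' + abs_mul_abs_self t

theorem exists_eq_inner_smul_add_sqrt_smul (hE : 1 < Module.rank ℝ E) {x y : E} (hx : ‖x‖ = 1)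
    (hy : ‖y‖ = 1) :
    ∃ v : E, ‖v‖ = 1 ∧ ⟪x, v⟫ = 0 ∧ y = ⟪x, y⟫ • x + √(1 - ⟪x, y⟫ ^ 2) • v := by
  set u : E := y - ⟪x, y⟫ • x
  have hxu : ⟪x, u⟫ = 0 := by
    rw [inner_sub_right, real_inner_smul_right, real_inner_self_eq_norm_sq, hx]
    ring
  have hu_norm : √(1 - ⟪x, y⟫ ^ 2) = ‖u‖ := by
    rw [← Real.sqrt_sq (norm_nonneg u), norm_sub_sq_real, real_inner_smul_right, norm_smul, hx, hy,
      real_inner_comm, Real.norm_eq_abs, mul_one, sq_abs]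
    ring_nf
  have hy_eq : y = ⟪x, y⟫ • x + u := (add_sub_cancel _ _).symm
  rcases eq_or_ne u 0 with hu | hu
  · obtain ⟨v, hv, hxv⟩ := exists_norm_eq_one_inner_eq_zero hE x
    refine ⟨v, hv, hxv, ?_⟩
    rwa [hu_norm, hu, norm_zero, zero_smul, ← hu]
  · refine ⟨‖u‖⁻¹ • u, norm_smul_inv_norm hu, ?_, ?_⟩
    · rw [real_inner_smul_right, hxu, mul_zero]
    · rwa [hu_norm, smul_inv_smul₀ (norm_ne_zero_iff.2 hu)]

theorem nhdsWithin_inner_le_map_nhds (hE : 1 < Module.rank ℝ E) (x y : sphere (0 : E) 1) :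
    𝓝[Set.Icc (-1) 1] ⟪(x : E), y⟫ ≤ map (fun z : sphere (0 : E) 1 => ⟪(x : E), z⟫) (𝓝 y) := by
  have hx : ‖(x : E)‖ = 1 := norm_eq_of_mem_sphere x
  obtain ⟨v, hv, hxv, hy⟩ := exists_eq_inner_smul_add_sqrt_smul hE hx (norm_eq_of_mem_sphere y)
  let γ (t : ℝ) : E := t • (x : E) + √(1 - t ^ 2) • v
  have hγ_cont : Continuous γ := by fun_prop
  have hγ_inner (t : ℝ) : ⟪(x : E), γ t⟫ = t := by
    simp [γ, inner_add_right, real_inner_smul_right, hxv]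
  intro s hs
  rw [mem_map, nhds_subtype_eq_comap, mem_comap] at hs
  obtain ⟨V, hV, hVs⟩ := hs
  have hγV : ∀ᶠ t in 𝓝 ⟪(x : E), y⟫, γ t ∈ V :=
    hγ_cont.continuousAt.eventually_mem (by rwa [show γ ⟪(x : E), y⟫ = y from hy.symm])
  filter_upwards [nhdsWithin_le_nhds hγV, self_mem_nhdsWithin] with t htV ht
  have ht_norm : γ t ∈ sphere (0 : E) 1 :=
    mem_sphere_zero_iff_norm.2 (norm_smul_add_sqrt_smul hx hv hxv ht)
  simpa [hγ_inner] using @hVs ⟨γ t, ht_norm⟩ htV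

end SphereInner

theorem exists_conull_inner_notMem_closure {E : Type*} [NormedAddCommGroup E]
    [InnerProductSpace ℝ E] [FiniteDimensional ℝ E] [MeasurableSpace E] [BorelSpace E]
    (hE : 1 < Module.rank ℝ E) {X : Set ℝ} (hX : X ⊆ Set.Icc (-1) 1)
    {I : Set (sphere (0 : E) 1)} (hI : MeasurableSet I)
    (hIX : ∀ ξ ∈ I, ∀ η ∈ I, ⟪(ξ : E), η⟫ ∉ X) :
    ∃ J ⊆ I, MeasurableSet J ∧ (volume : Measure E).toSphere (I \ J) = 0 ∧
      ∀ ξ ∈ J, ∀ η ∈ J, ⟪(ξ : E), η⟫ ∉ closure X := by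
  obtain ⟨J, hJI, hJ, hIJ, hgood⟩ := exists_conull_forall_eventually_mem_smul
    (unitary (E →L[ℝ] E)) hI (measure_ne_top (volume : Measure E).toSphere I)
  refine ⟨J, hJI, hJ, hIJ, fun ξ hξ η hη hmem => ?_⟩
  have hη_le : 𝓝 η ≤ map (· • η) (𝓝 (1 : unitary (E →L[ℝ] E))) :=
    (isOpenMap_smul_of_sigmaCompact η).nhds_le 1
  have hnear : ∀ᶠ ζ : sphere (0 : E) 1 in 𝓝 η, ⟪(ξ : E), ζ⟫ ∉ X := by
    refine hη_le ((hgood ξ hξ η hη).mono ?_)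
    rintro h ⟨g, ⟨ξ', hξ', rfl⟩, η', hη', hη'_eq⟩
    change ⟪((g • ξ' : sphere (0 : E) 1) : E), ((h • η : sphere (0 : E) 1) : E)⟫ ∉ X
    rw [← hη'_eq, inner_unitary_smul_smul]
    exact hIX ξ' hξ' η' hη'
  have hnotMem : ∀ᶠ t in 𝓝[Set.Icc (-1) 1] ⟪(ξ : E), η⟫, t ∉ X :=
    nhdsWithin_inner_le_map_nhds hE ξ η hnear
  obtain ⟨t, htX, ht⟩ := ((mem_closure_iff_frequently.1 hmem).and_eventually
    (eventually_nhdsWithin_iff.1 hnotMem)).exists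
  exact ht (hX htX) htX

section Avoids

variable {n : ℕ} {X Y : Set ℝ} {I : Set (Sph n)}

theorem Avoids.anti (hXY : X ⊆ Y) (hI : Avoids Y I) : Avoids X I :=
  fun ξ hξ η hη hmem => hI ξ hξ η hη (hXY hmem)

theorem Avoids.eq_empty (hI : Avoids X I) (hX : (1 : ℝ) ∈ X) : I = ∅ := by
  refine Set.eq_empty_of_forall_notMem fun ξ hξ => hI ξ hξ ξ hξ ?_
  rwa [real_inner_self_eq_norm_sq, norm_eq_of_mem_sphere, one_pow]

theorem Avoids.exists_closure (hn : 2 ≤ n) (hX : X ⊆ Set.Icc (-1) 1) (hI : MeasurableSet I)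
    (hIX : Avoids X I) :
    ∃ J, (MeasurableSet J ∧ Avoids (closure X) J) ∧ sphMeasure n I ≤ sphMeasure n J := by
  have hrank : 1 < Module.rank ℝ (Eucl n) := by
    rw [← Module.finrank_eq_rank, finrank_euclideanSpace_fin]
    exact_mod_cast hn
  obtain ⟨J, -, hJ, hIJ, hJX⟩ := exists_conull_inner_notMem_closure hrank hX hI hIX
  refine ⟨J, ⟨hJ, hJX⟩, measure_mono_ae (ae_le_set.2 ?_)⟩
  rw [sphMeasure, Measure.smul_apply, hIJ, smul_zero]

end Avoids

theorem avoiding_sup_closure_general {n : ℕ} (hn : 2 ≤ n) (X : Set ℝ)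
    (hX : X ⊆ Set.Icc (-1 : ℝ) 1) :
    (⨆ (I : Set (Sph n)) (_ : MeasurableSet I ∧ Avoids X I), sphMeasure n I) =
      (⨆ (I : Set (Sph n)) (_ : MeasurableSet I ∧ Avoids (closure X) I), sphMeasure n I) ∧
    ((1 : ℝ) ∈ closure X →
      (⨆ (I : Set (Sph n)) (_ : MeasurableSet I ∧ Avoids X I), sphMeasure n I) = 0) := by
  have hsup : (⨆ (I : Set (Sph n)) (_ : MeasurableSet I ∧ Avoids X I), sphMeasure n I) =
      ⨆ (I : Set (Sph n)) (_ : MeasurableSet I ∧ Avoids (closure X) I), sphMeasure n I := by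
    refine le_antisymm (iSup₂_mono' fun I hI => ?_) (biSup_mono fun I hI => ?_)
    · obtain ⟨J, hJ, hIJ⟩ := hI.2.exists_closure hn hX hI.1
      exact ⟨J, hJ, hIJ⟩
    · exact ⟨hI.1, hI.2.anti subset_closure⟩
  refine ⟨hsup, fun h1 => hsup.trans (le_bot_iff.1 (iSup₂_le fun I hI => ?_))⟩
  rw [hI.2.eq_empty h1, measure_empty, bot_eq_zero]

/-- **Theorem (invariance under closure).** Let `n ≥ 3` and let `X ⊆ [-1,1]` with closure
`X̄`. Then `α_X(n) = α_{X̄}(n)`: the supremum of the measures of measurable `X`-avoiding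
subsets of `S^{n-1}` equals the supremum over `X̄`-avoiding ones. In particular, if
`1 ∈ X̄` then `α_X(n) = 0`. -/
theorem avoiding_sup_closure {n : ℕ} (hn : 3 ≤ n) (X : Set ℝ)
    (hX : X ⊆ Set.Icc (-1 : ℝ) 1) :
    (⨆ (I : Set (Sph n)) (_ : MeasurableSet I ∧ Avoids X I), sphMeasure n I) =
      (⨆ (I : Set (Sph n)) (_ : MeasurableSet I ∧ Avoids (closure X) I), sphMeasure n I) ∧
    ((1 : ℝ) ∈ closure X →
      (⨆ (I : Set (Sph n)) (_ : MeasurableSet I ∧ Avoids X I), sphMeasure n I) = 0) :=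
  avoiding_sup_closure_general (by omega) X hX
end
end
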